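/- arXiv:math/9201217 — 2 statements merged into one kernel-verified Lean document; each statement's English description precedes it below -/
import Mathlib

section
/- Suppose the unit vectors u_1,…,u_m and positive weights c_1,…,c_m satisfy John's conditions, and let K = {x ∈ ℝ^n : ⟨x, u_i⟩ ≤ 1 for all i}. Let 1 ≤ k ≤ n, and let E be the k-dimensional ellipsoid {x ∈ ℝ^n : Σ_{j=1}^k α_j^{-2} ⟨x−y, v_j⟩² ≤ 1, and ⟨x−y, v_j⟩ = 0 for k+1 ≤ j ≤ n}, for some y ∈ ℝ^n, orthonormal basis (v_j)_{j=1}^n of ℝ^n and positive reals (α_j)_{j=1}^k. If E ⊆ K, then Σ_{j=1}^k α_j ≤ √(k n (n+1)/(k+1)). -/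
open Finset RealInnerProductSpace

/-!
Write an ellipsoid as `y + A B`, with `B` the Euclidean unit ball of `ℝ^k` and `a j = A e_j`, and
put `S = ∑ j, ⟪a j, v j⟫` for an orthonormal family `v`; for the principal semi-axes
`a j = α j • v j` this is `∑ j, α j`. The inclusion in `K` says that `‖Aᵀ u_i‖ ≤ 1 - ⟪y, u_i⟫` for
all `i`, which is used twice.

* Squaring and summing with the weights `c_i` gives `∑ j, ‖a j‖² ≤ n + ‖y‖²`, hence
  `S² ≤ k (n + ‖y‖²)` by Cauchy-Schwarz.
* Pairing `Aᵀ u_i` with the coordinates of `S • (u_i + L⁻¹ • y)` along `v`, where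
  `L² = S² + ‖y‖²`, and summing with the weights `c_i` gives `S² ≤ n L - ‖y‖²`, that is `L ≤ n`.

Eliminating `‖y‖²` between `S² ≤ k (n + ‖y‖²)` and `S² + ‖y‖² ≤ n²` gives the bound.
-/

section

variable {ι κ η E : Type*} [Fintype ι] [Fintype κ] [NormedAddCommGroup E] [InnerProductSpace ℝ E]

/-- John's decomposition of the identity: unit vectors `u i` and nonnegative weights `c i` with
barycentre `0` and `∑ i, c i • (u i ⊗ u i) = id`. -/
structure IsJohnDecomposition (u : ι → E) (c : ι → ℝ) : Prop where
  norm_eq_one : ∀ i, ‖u i‖ = 1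
  weight_nonneg : ∀ i, 0 ≤ c i
  sum_smul_eq_zero : ∑ i, c i • u i = 0
  sum_inner_smul : ∀ x : E, ∑ i, (c i * ⟪u i, x⟫) • u i = x

namespace IsJohnDecomposition

variable {u : ι → E} {c : ι → ℝ}

lemma sum_weight_mul_inner (h : IsJohnDecomposition u c) (x : E) : ∑ i, c i * ⟪x, u i⟫ = 0 := by
  simpa only [inner_sum, real_inner_smul_right, inner_zero_right] using
    congrArg (fun z ↦ ⟪x, z⟫) h.sum_smul_eq_zero

lemma sum_weight_mul_inner_mul_inner (h : IsJohnDecomposition u c) (x z : E) :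
    ∑ i, c i * (⟪x, u i⟫ * ⟪z, u i⟫) = ⟪x, z⟫ := by
  conv_rhs => rw [← h.sum_inner_smul z]
  rw [inner_sum]
  refine sum_congr rfl fun i _ ↦ ?_
  rw [real_inner_smul_right, real_inner_comm z (u i)]
  ring

lemma sum_weight_mul_inner_mul_inner_add (h : IsJohnDecomposition u c) (x z w : E) :
    ∑ i, c i * (⟪x, u i⟫ * ⟪z, u i + w⟫) = ⟪x, z⟫ := by
  have hsplit (i : ι) : c i * (⟪x, u i⟫ * ⟪z, u i + w⟫) =
      c i * (⟪x, u i⟫ * ⟪z, u i⟫) + c i * ⟪x, u i⟫ * ⟪z, w⟫ := by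
    rw [inner_add_right]
    ring
  simp only [hsplit, sum_add_distrib, ← sum_mul, h.sum_weight_mul_inner_mul_inner,
    h.sum_weight_mul_inner, zero_mul, add_zero]

lemma finiteDimensional (h : IsJohnDecomposition u c) : FiniteDimensional ℝ E := by
  have hspan : Submodule.span ℝ (Set.range u) = ⊤ := by
    refine Submodule.eq_top_iff'.2 fun x ↦ ?_
    rw [← h.sum_inner_smul x]
    exact Submodule.sum_smul_mem _ _ fun i _ ↦ Submodule.subset_span ⟨i, rfl⟩
  exact ⟨hspan ▸ Submodule.fg_span (Set.finite_range u)⟩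

lemma sum_weight (h : IsJohnDecomposition u c) : ∑ i, c i = Module.finrank ℝ E := by
  have := h.finiteDimensional
  let b := stdOrthonormalBasis ℝ E
  calc ∑ i, c i = ∑ i, c i * ∑ j, ⟪b j, u i⟫ * ⟪b j, u i⟫ := by
        refine sum_congr rfl fun i _ ↦ ?_
        have hparseval := b.sum_inner_mul_inner (u i) (u i)
        simp only [real_inner_comm _ (u i)] at hparseval
        rw [hparseval, real_inner_self_eq_norm_sq, h.norm_eq_one, one_pow, mul_one]
    _ = ∑ j, ⟪b j, b j⟫ := by
        simp only [mul_sum]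
        rw [sum_comm]
        exact sum_congr rfl fun j _ ↦ h.sum_weight_mul_inner_mul_inner (b j) (b j)
    _ = Module.finrank ℝ E := by simp

lemma sum_weight_mul_quadratic (h : IsJohnDecomposition u c) (x : E) (p q r : ℝ) :
    ∑ i, c i * (p + q * ⟪x, u i⟫ + r * ⟪x, u i⟫ ^ 2) =
      p * Module.finrank ℝ E + r * ‖x‖ ^ 2 := by
  have hsplit (i : ι) : c i * (p + q * ⟪x, u i⟫ + r * ⟪x, u i⟫ ^ 2) =
      p * c i + q * (c i * ⟪x, u i⟫) + r * (c i * (⟪x, u i⟫ * ⟪x, u i⟫)) := by ring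
  simp only [hsplit, sum_add_distrib, ← mul_sum, h.sum_weight, h.sum_weight_mul_inner,
    h.sum_weight_mul_inner_mul_inner, real_inner_self_eq_norm_sq, mul_zero, add_zero]

end IsJohnDecomposition

/-- The ellipsoid with centre `y` spanned by the vectors `a j`: the image of the Euclidean unit ball
under `t ↦ y + ∑ j, t j • a j`. The `a j` need not be orthogonal; when they are, they are its
principal semi-axes. -/
def ellipsoid (y : E) (a : κ → E) : Set E :=
  {x | ∃ t : κ → ℝ, ∑ j, t j ^ 2 ≤ 1 ∧ y + ∑ j, t j • a j = x}

lemma ellipsoid_smul_comp_subset {v : η → E} (hv : Orthonormal ℝ v) {e : κ → η}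
    (he : Function.Injective e) (y : E) (α : κ → ℝ) :
    ellipsoid y (fun j ↦ α j • v (e j)) ⊆
      {x | ∑ j, (α j ^ 2)⁻¹ * ⟪x - y, v (e j)⟫ ^ 2 ≤ 1 ∧
        ∀ l ∉ Set.range e, ⟪x - y, v l⟫ = 0} := by
  rintro _ ⟨t, ht, rfl⟩
  simp only [add_sub_cancel_left, smul_smul, Set.mem_ofPred_eq]
  refine ⟨le_trans (sum_le_sum fun j _ ↦ ?_) ht, fun l hl ↦ ?_⟩
  · have hcoord : ⟪∑ i, (t i * α i) • v (e i), v (e j)⟫ = t j * α j :=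
      (hv.comp e he).inner_left_fintype _ j
    calc (α j ^ 2)⁻¹ * ⟪∑ i, (t i * α i) • v (e i), v (e j)⟫ ^ 2
        = (α j ^ 2)⁻¹ * α j ^ 2 * t j ^ 2 := by rw [hcoord]; ring
      _ ≤ t j ^ 2 := mul_le_of_le_one_left (sq_nonneg _) inv_mul_le_one
  · rw [sum_inner]
    refine sum_eq_zero fun j _ ↦ ?_
    rw [real_inner_smul_left, hv.inner_eq_zero fun hj ↦ hl ⟨j, hj⟩, mul_zero]

lemma sqrt_sum_inner_sq_le_of_ellipsoid_subset {y w : E} {a : κ → E} {b : ℝ}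
    (hE : ellipsoid y a ⊆ {x | ⟪x, w⟫ ≤ b}) : √(∑ j, ⟪a j, w⟫ ^ 2) ≤ b - ⟪y, w⟫ := by
  set r := √(∑ j, ⟪a j, w⟫ ^ 2)
  have hr : ∑ j, ⟪a j, w⟫ ^ 2 = r ^ 2 := (Real.sq_sqrt (by positivity)).symm
  -- The point of the ellipsoid that is extremal in direction `w`; it is the centre when `r = 0`.
  have hmem : y + ∑ j, (⟪a j, w⟫ / r) • a j ∈ ellipsoid y a := by
    refine ⟨fun j ↦ ⟪a j, w⟫ / r, ?_, rfl⟩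
    simp only [div_pow]
    rw [← sum_div, hr]
    exact div_self_le_one _
  have hinner : ⟪∑ j, (⟪a j, w⟫ / r) • a j, w⟫ = r := by
    simp only [sum_inner, real_inner_smul_left, div_mul_eq_mul_div, ← sq]
    rw [← sum_div, hr, sq, mul_self_div_self]
  have hle : ⟪y + ∑ j, (⟪a j, w⟫ / r) • a j, w⟫ ≤ b := hE hmem
  rw [inner_add_left, hinner] at hle
  linarith

lemma sq_mul_norm_add_inv_smul_sq_le {w : E} (hw : ‖w‖ = 1) (y : E) {L S : ℝ} (hL : L ≠ 0)
    (hLS : L ^ 2 = S ^ 2 + ‖y‖ ^ 2) :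
    S ^ 2 * ‖w + L⁻¹ • y‖ ^ 2 ≤ (L + ⟪y, w⟫) ^ 2 := by
  have hnorm : ‖w + L⁻¹ • y‖ ^ 2 = 1 + 2 * (L⁻¹ * ⟪y, w⟫) + L⁻¹ ^ 2 * ‖y‖ ^ 2 := by
    rw [norm_add_sq_real, hw, real_inner_smul_right, real_inner_comm, norm_smul, mul_pow,
      Real.norm_eq_abs, sq_abs, one_pow]
  have hdiff : (L + ⟪y, w⟫) ^ 2 - S ^ 2 * ‖w + L⁻¹ • y‖ ^ 2 = (⟪y, w⟫ + ‖y‖ ^ 2 / L) ^ 2 := by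
    rw [hnorm, eq_sub_of_add_eq hLS.symm]
    field_simp
    ring
  exact sub_nonneg.1 (hdiff ▸ sq_nonneg _)

namespace IsJohnDecomposition

variable {u : ι → E} {c : ι → ℝ} {y : E} {a v : κ → E}

lemma sum_norm_sq_le_of_ellipsoid_subset (h : IsJohnDecomposition u c)
    (hE : ellipsoid y a ⊆ {x | ∀ i, ⟪x, u i⟫ ≤ 1}) :
    ∑ j, ‖a j‖ ^ 2 ≤ Module.finrank ℝ E + ‖y‖ ^ 2 := by
  have hsupport (i : ι) : ∑ j, ⟪a j, u i⟫ ^ 2 ≤ (1 - ⟪y, u i⟫) ^ 2 :=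
    (Real.sqrt_le_iff.1 <| sqrt_sum_inner_sq_le_of_ellipsoid_subset fun _ hx ↦ hE hx i).2
  calc ∑ j, ‖a j‖ ^ 2 = ∑ i, c i * ∑ j, ⟪a j, u i⟫ ^ 2 := by
        simp only [mul_sum]
        rw [sum_comm]
        simp only [sq ⟪_, _⟫, h.sum_weight_mul_inner_mul_inner, real_inner_self_eq_norm_sq]
    _ ≤ ∑ i, c i * (1 - ⟪y, u i⟫) ^ 2 :=
        sum_le_sum fun i _ ↦ mul_le_mul_of_nonneg_left (hsupport i) (h.weight_nonneg i)
    _ = ∑ i, c i * (1 + -2 * ⟪y, u i⟫ + 1 * ⟪y, u i⟫ ^ 2) :=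
        sum_congr rfl fun i _ ↦ by ring
    _ = Module.finrank ℝ E + ‖y‖ ^ 2 := by
        rw [h.sum_weight_mul_quadratic, one_mul, one_mul]

lemma sum_inner_mul_le_of_ellipsoid_subset (h : IsJohnDecomposition u c) (hv : Orthonormal ℝ v)
    (hE : ellipsoid y a ⊆ {x | ∀ i, ⟪x, u i⟫ ≤ 1}) {L S : ℝ} (hL : 0 < L)
    (hLS : L ^ 2 = S ^ 2 + ‖y‖ ^ 2) (i : ι) :
    ∑ j, ⟪a j, u i⟫ * (S * ⟪v j, u i + L⁻¹ • y⟫) ≤ (1 - ⟪y, u i⟫) * (L + ⟪y, u i⟫) := by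
  have hnonneg : 0 ≤ L + ⟪y, u i⟫ := by
    have hyL : ‖y‖ ≤ L := le_of_sq_le_sq (by linarith [sq_nonneg S]) hL.le
    have hinner := neg_le_of_abs_le (abs_real_inner_le_norm y (u i))
    rw [h.norm_eq_one, mul_one] at hinner
    linarith
  have hbessel : ∑ j, ⟪v j, u i + L⁻¹ • y⟫ ^ 2 ≤ ‖u i + L⁻¹ • y‖ ^ 2 := by
    simpa using hv.sum_inner_products_le (u i + L⁻¹ • y) (s := univ)
  have htest : √(∑ j, (S * ⟪v j, u i + L⁻¹ • y⟫) ^ 2) ≤ L + ⟪y, u i⟫ := by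
    refine Real.sqrt_le_iff.2 ⟨hnonneg, ?_⟩
    calc ∑ j, (S * ⟪v j, u i + L⁻¹ • y⟫) ^ 2 = S ^ 2 * ∑ j, ⟪v j, u i + L⁻¹ • y⟫ ^ 2 := by
          simp only [mul_pow, mul_sum]
      _ ≤ S ^ 2 * ‖u i + L⁻¹ • y‖ ^ 2 := mul_le_mul_of_nonneg_left hbessel (sq_nonneg S)
      _ ≤ (L + ⟪y, u i⟫) ^ 2 := sq_mul_norm_add_inv_smul_sq_le (h.norm_eq_one i) y hL.ne' hLS
  have hsupport : √(∑ j, ⟪a j, u i⟫ ^ 2) ≤ 1 - ⟪y, u i⟫ :=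
    sqrt_sum_inner_sq_le_of_ellipsoid_subset fun _ hx ↦ hE hx i
  exact (Real.sum_mul_le_sqrt_mul_sqrt _ _ _).trans <|
    mul_le_mul hsupport htest (Real.sqrt_nonneg _) ((Real.sqrt_nonneg _).trans hsupport)

lemma sq_sum_inner_add_norm_sq_le_of_ellipsoid_subset (h : IsJohnDecomposition u c)
    (hv : Orthonormal ℝ v) (hE : ellipsoid y a ⊆ {x | ∀ i, ⟪x, u i⟫ ≤ 1}) :
    (∑ j, ⟪a j, v j⟫) ^ 2 + ‖y‖ ^ 2 ≤ (Module.finrank ℝ E : ℝ) ^ 2 := by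
  set S := ∑ j, ⟪a j, v j⟫ with hS
  set L := √(S ^ 2 + ‖y‖ ^ 2)
  have hLS : L ^ 2 = S ^ 2 + ‖y‖ ^ 2 := Real.sq_sqrt (by positivity)
  obtain hL | hL : 0 = L ∨ 0 < L := (Real.sqrt_nonneg _).eq_or_lt
  · rw [← hLS, ← hL, zero_pow two_ne_zero]
    positivity
  have hsum : S ^ 2 ≤ L * Module.finrank ℝ E - ‖y‖ ^ 2 :=
    calc S ^ 2 = ∑ j, S * ⟪a j, v j⟫ := by rw [← mul_sum, ← hS, sq]
      _ = ∑ i, c i * ∑ j, ⟪a j, u i⟫ * (S * ⟪v j, u i + L⁻¹ • y⟫) := by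
          simp only [mul_sum, mul_left_comm _ S]
          rw [sum_comm]
          simp only [← mul_sum, h.sum_weight_mul_inner_mul_inner_add]
      _ ≤ ∑ i, c i * ((1 - ⟪y, u i⟫) * (L + ⟪y, u i⟫)) :=
          sum_le_sum fun i _ ↦ mul_le_mul_of_nonneg_left
            (h.sum_inner_mul_le_of_ellipsoid_subset hv hE hL hLS i) (h.weight_nonneg i)
      _ = ∑ i, c i * (L + (1 - L) * ⟪y, u i⟫ + -1 * ⟪y, u i⟫ ^ 2) :=
          sum_congr rfl fun i _ ↦ by ring
      _ = L * Module.finrank ℝ E - ‖y‖ ^ 2 := by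
          rw [h.sum_weight_mul_quadratic, neg_one_mul, sub_eq_add_neg]
  have hLn : L ≤ Module.finrank ℝ E := le_of_mul_le_mul_left (by linarith) hL
  exact hLS ▸ pow_le_pow_left₀ hL.le hLn 2

end IsJohnDecomposition

theorem stmt_12_general {u : ι → E} {c : ι → ℝ} (h : IsJohnDecomposition u c) {y : E}
    {a v : κ → E} (hv : Orthonormal ℝ v) (hE : ellipsoid y a ⊆ {x | ∀ i, ⟪x, u i⟫ ≤ 1}) :
    ∑ j, ⟪a j, v j⟫ ≤ √((Fintype.card κ * Module.finrank ℝ E * (Module.finrank ℝ E + 1)) /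
      (Fintype.card κ + 1)) := by
  set n : ℝ := (Module.finrank ℝ E : ℝ)
  set k : ℝ := (Fintype.card κ : ℝ)
  have hinner_sq (j : κ) : ⟪a j, v j⟫ ^ 2 ≤ ‖a j‖ ^ 2 := by
    rw [sq_le_sq, abs_norm]
    simpa only [hv.norm_eq_one, mul_one] using abs_real_inner_le_norm (a j) (v j)
  have hfirst : (∑ j, ⟪a j, v j⟫) ^ 2 ≤ k * (n + ‖y‖ ^ 2) :=
    calc (∑ j, ⟪a j, v j⟫) ^ 2 ≤ k * ∑ j, ⟪a j, v j⟫ ^ 2 := sq_sum_le_card_mul_sum_sq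
      _ ≤ k * ∑ j, ‖a j‖ ^ 2 :=
        mul_le_mul_of_nonneg_left (sum_le_sum fun j _ ↦ hinner_sq j) (Nat.cast_nonneg _)
      _ ≤ k * (n + ‖y‖ ^ 2) := by gcongr; exact h.sum_norm_sq_le_of_ellipsoid_subset hE
  have hsecond : k * ((∑ j, ⟪a j, v j⟫) ^ 2 + ‖y‖ ^ 2) ≤ k * n ^ 2 := by
    gcongr
    exact h.sq_sum_inner_add_norm_sq_le_of_ellipsoid_subset hv hE
  refine Real.le_sqrt_of_sq_le ((le_div_iff₀ (by positivity)).2 ?_)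
  linarith

end

/-- Proposition 4 (arithmetic-mean form): under John's conditions, the semi-axes
of a `k`-dimensional ellipsoid contained in `K` satisfy
`∑ j, α j ≤ √(k n (n+1)/(k+1))`. -/
theorem stmt_12 {n m k : ℕ} (hn : 1 ≤ n) (hm : 1 ≤ m) (hk1 : 1 ≤ k) (hkn : k ≤ n)
    (u : Fin m → EuclideanSpace ℝ (Fin n)) (c : Fin m → ℝ)
    (hu : ∀ i, ‖u i‖ = 1) (hc : ∀ i, 0 < c i)
    (ha : ∑ i, c i • u i = 0)
    (hb : ∀ x : EuclideanSpace ℝ (Fin n), ∑ i, (c i * ⟪u i, x⟫) • u i = x)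
    (y : EuclideanSpace ℝ (Fin n))
    (v : OrthonormalBasis (Fin n) ℝ (EuclideanSpace ℝ (Fin n)))
    (α : Fin k → ℝ) (hα : ∀ j, 0 < α j)
    (hEK : {x : EuclideanSpace ℝ (Fin n) |
        (∑ j : Fin k, ((α j) ^ 2)⁻¹ * ⟪x - y, v (Fin.castLE hkn j)⟫ ^ 2 ≤ 1) ∧
        ∀ j : Fin n, k ≤ (j : ℕ) → ⟪x - y, v j⟫ = 0} ⊆
      {x : EuclideanSpace ℝ (Fin n) | ∀ i, ⟪x, u i⟫ ≤ 1}) :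
    ∑ j, α j ≤ Real.sqrt ((k * n * (n + 1)) / (k + 1)) := by
  have hsub : ellipsoid y (fun j ↦ α j • v (Fin.castLE hkn j)) ⊆ {x | ∀ i, ⟪x, u i⟫ ≤ 1} :=
    fun x hx ↦
      have ⟨hsum, hperp⟩ :=
        ellipsoid_smul_comp_subset v.orthonormal (Fin.castLE_injective hkn) y α hx
      hEK ⟨hsum, fun j hj ↦ hperp j (by simpa [Fin.range_castLE] using hj)⟩
  simpa [real_inner_smul_left] using
    stmt_12_general ⟨hu, fun i ↦ (hc i).le, ha, hb⟩
      (v.orthonormal.comp _ (Fin.castLE_injective hkn)) hsub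
end

section
/- Suppose the unit vectors u_1,…,u_m and positive weights c_1,…,c_m satisfy John's conditions, and let K = {x ∈ ℝ^n : ⟨x, u_i⟩ ≤ 1 for all i}. Then for all x, y ∈ K, ‖x − y‖ ≤ √(2n(n+1)); that is, the diameter of K is at most √(2n(n+1)). -/
open Finset RealInnerProductSpace

/-!
For `x, y` with `⟪x, uᵢ⟫ ≤ s` and `⟪y, uᵢ⟫ ≤ t`, John's conditions turn the nonnegative sum
`∑ cᵢ (s - ⟪x, uᵢ⟫) (t - ⟪y, uᵢ⟫)` into `s t ∑ cᵢ + ⟪x, y⟫`. With `s = t = 1` this bounds `⟪x, y⟫`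
below on `K`; with `y = -x` and `t = ‖x‖` it gives `‖x‖ ≤ ∑ cᵢ` on `K`. Taking the trace of
`∑ cᵢ uᵢ ⊗ uᵢ = I` identifies `∑ cᵢ` with the dimension `n`, so
`‖x - y‖² = ‖x‖² + ‖y‖² - 2 ⟪x, y⟫ ≤ 2 n² + 2 n`.
-/

section

variable {ι E : Type*} [Fintype ι] [NormedAddCommGroup E] [InnerProductSpace ℝ E]
  {c : ι → ℝ} {u : ι → E}

/-- The weighted vectors `(c i, u i)` decompose the identity, `∑ i, c i • (u i ⊗ u i) = I`: John's
second condition, expressed by evaluating both sides at every vector. -/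
def IsIdentityDecomposition (c : ι → ℝ) (u : ι → E) : Prop :=
  ∀ x : E, ∑ i, (c i * ⟪u i, x⟫) • u i = x

lemma sum_mul_inner_eq_zero (hcenter : ∑ i, c i • u i = 0) (x : E) :
    ∑ i, c i * ⟪x, u i⟫ = 0 := by
  simp only [← real_inner_smul_right, ← inner_sum, hcenter, inner_zero_right]

namespace IsIdentityDecomposition

lemma sum_mul_inner_mul_inner (h : IsIdentityDecomposition c u) (x y : E) :
    ∑ i, c i * (⟪x, u i⟫ * ⟪y, u i⟫) = ⟪x, y⟫ := by
  calc ∑ i, c i * (⟪x, u i⟫ * ⟪y, u i⟫) = ⟪x, ∑ i, (c i * ⟪u i, y⟫) • u i⟫ := by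
        simp only [inner_sum, real_inner_smul_right, real_inner_comm y]
        exact sum_congr rfl fun i _ => by ring
    _ = ⟪x, y⟫ := by rw [h y]

lemma span_range_eq_top (h : IsIdentityDecomposition c u) :
    Submodule.span ℝ (Set.range u) = ⊤ := by
  refine Submodule.eq_top_iff'.mpr fun x => ?_
  rw [← h x]
  exact Submodule.sum_mem _ fun i _ =>
    Submodule.smul_mem _ _ (Submodule.subset_span (Set.mem_range_self i))

lemma finiteDimensional (h : IsIdentityDecomposition c u) : FiniteDimensional ℝ E :=
  .of_fg_top (h.span_range_eq_top ▸ Submodule.fg_span (Set.finite_range u))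

lemma sum_mul_norm_sq (h : IsIdentityDecomposition c u) :
    ∑ i, c i * ‖u i‖ ^ 2 = Module.finrank ℝ E := by
  have := h.finiteDimensional
  have hid : ∑ i, c i • (InnerProductSpace.rankOne ℝ (u i) (u i)).toLinearMap = LinearMap.id := by
    ext x
    simpa [smul_smul] using h x
  calc ∑ i, c i * ‖u i‖ ^ 2
      = LinearMap.trace ℝ E
          (∑ i, c i • (InnerProductSpace.rankOne ℝ (u i) (u i)).toLinearMap) := by
        simp only [map_sum, map_smul, InnerProductSpace.trace_rankOne,
          real_inner_self_eq_norm_sq, smul_eq_mul]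
    _ = Module.finrank ℝ E := by rw [hid, LinearMap.trace_id]

lemma sum_eq_finrank (h : IsIdentityDecomposition c u) (hu : ∀ i, ‖u i‖ = 1) :
    ∑ i, c i = Module.finrank ℝ E := by
  simpa only [hu, one_pow, mul_one] using h.sum_mul_norm_sq

lemma sum_mul_sub_inner_mul_sub_inner (h : IsIdentityDecomposition c u)
    (hcenter : ∑ i, c i • u i = 0) (x y : E) (s t : ℝ) :
    ∑ i, c i * ((s - ⟪x, u i⟫) * (t - ⟪y, u i⟫)) = s * t * ∑ i, c i + ⟪x, y⟫ := by
  calc ∑ i, c i * ((s - ⟪x, u i⟫) * (t - ⟪y, u i⟫))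
      = s * t * ∑ i, c i - t * ∑ i, c i * ⟪x, u i⟫ - s * ∑ i, c i * ⟪y, u i⟫
          + ∑ i, c i * (⟪x, u i⟫ * ⟪y, u i⟫) := by
        simp only [mul_sum, ← sum_sub_distrib, ← sum_add_distrib]
        exact sum_congr rfl fun i _ => by ring
    _ = s * t * ∑ i, c i + ⟪x, y⟫ := by
        rw [sum_mul_inner_eq_zero hcenter, sum_mul_inner_eq_zero hcenter,
          h.sum_mul_inner_mul_inner]
        ring

variable {x y : E}

lemma neg_mul_sum_le_inner (h : IsIdentityDecomposition c u) (hc : ∀ i, 0 ≤ c i)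
    (hcenter : ∑ i, c i • u i = 0) {s t : ℝ} (hx : ∀ i, ⟪x, u i⟫ ≤ s)
    (hy : ∀ i, ⟪y, u i⟫ ≤ t) : -(s * t * ∑ i, c i) ≤ ⟪x, y⟫ := by
  have hsum : 0 ≤ ∑ i, c i * ((s - ⟪x, u i⟫) * (t - ⟪y, u i⟫)) :=
    sum_nonneg fun i _ =>
      mul_nonneg (hc i) (mul_nonneg (sub_nonneg.mpr (hx i)) (sub_nonneg.mpr (hy i)))
  rw [h.sum_mul_sub_inner_mul_sub_inner hcenter] at hsum
  linarith

lemma norm_le_sum (h : IsIdentityDecomposition c u) (hu : ∀ i, ‖u i‖ ≤ 1) (hc : ∀ i, 0 ≤ c i)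
    (hcenter : ∑ i, c i • u i = 0) (hx : ∀ i, ⟪x, u i⟫ ≤ 1) : ‖x‖ ≤ ∑ i, c i := by
  have hneg (i : ι) : ⟪-x, u i⟫ ≤ ‖x‖ := by
    calc ⟪-x, u i⟫ ≤ ‖-x‖ * ‖u i‖ := real_inner_le_norm _ _
      _ ≤ ‖x‖ := by simpa only [norm_neg] using mul_le_of_le_one_right (norm_nonneg _) (hu i)
  have hsq : ‖x‖ * ‖x‖ ≤ ‖x‖ * ∑ i, c i := by
    have hinner := h.neg_mul_sum_le_inner hc hcenter hx hneg
    rw [inner_neg_right, real_inner_self_eq_norm_mul_norm] at hinner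
    linarith
  rcases (norm_nonneg x).eq_or_lt with hzero | hpos
  · exact hzero ▸ sum_nonneg fun i _ => hc i
  · exact le_of_mul_le_mul_left hsq hpos

lemma norm_sub_le_sqrt_sum (h : IsIdentityDecomposition c u) (hu : ∀ i, ‖u i‖ ≤ 1)
    (hc : ∀ i, 0 ≤ c i) (hcenter : ∑ i, c i • u i = 0) (hx : ∀ i, ⟪x, u i⟫ ≤ 1)
    (hy : ∀ i, ⟪y, u i⟫ ≤ 1) :
    ‖x - y‖ ≤ √(2 * (∑ i, c i) * (∑ i, c i + 1)) := by
  apply Real.le_sqrt_of_sq_le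
  have hxnorm : ‖x‖ ^ 2 ≤ (∑ i, c i) ^ 2 := by gcongr; exact h.norm_le_sum hu hc hcenter hx
  have hynorm : ‖y‖ ^ 2 ≤ (∑ i, c i) ^ 2 := by gcongr; exact h.norm_le_sum hu hc hcenter hy
  have hinner : -(1 * 1 * ∑ i, c i) ≤ ⟪x, y⟫ := h.neg_mul_sum_le_inner hc hcenter hx hy
  calc ‖x - y‖ ^ 2 = ‖x‖ ^ 2 - 2 * ⟪x, y⟫ + ‖y‖ ^ 2 := norm_sub_sq_real x y
    _ ≤ 2 * (∑ i, c i) * (∑ i, c i + 1) := by linarith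

end IsIdentityDecomposition

theorem stmt_16_general {x y : E} (hu : ∀ i, ‖u i‖ = 1) (hc : ∀ i, 0 ≤ c i)
    (hcenter : ∑ i, c i • u i = 0) (h : IsIdentityDecomposition c u)
    (hx : ∀ i, ⟪x, u i⟫ ≤ 1) (hy : ∀ i, ⟪y, u i⟫ ≤ 1) :
    ‖x - y‖ ≤ √(2 * Module.finrank ℝ E * (Module.finrank ℝ E + 1)) := by
  rw [← h.sum_eq_finrank hu]
  exact h.norm_sub_le_sqrt_sum (fun i => (hu i).le) hc hcenter hx hy

end

/-- Under John's conditions, the diameter of `K = {x : ⟪x, u i⟫ ≤ 1 ∀ i}` is at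
most `√(2n(n+1))`: any two points `x, y` of `K` satisfy `‖x - y‖ ≤ √(2n(n+1))`. -/
theorem stmt_16 {n m : ℕ} (hn : 1 ≤ n) (hm : 1 ≤ m)
    (u : Fin m → EuclideanSpace ℝ (Fin n)) (c : Fin m → ℝ)
    (hu : ∀ i, ‖u i‖ = 1) (hc : ∀ i, 0 < c i)
    (ha : ∑ i, c i • u i = 0)
    (hb : ∀ x : EuclideanSpace ℝ (Fin n), ∑ i, (c i * ⟪u i, x⟫) • u i = x)
    (x y : EuclideanSpace ℝ (Fin n))
    (hx : ∀ i, ⟪x, u i⟫ ≤ 1) (hy : ∀ i, ⟪y, u i⟫ ≤ 1) :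
    ‖x - y‖ ≤ Real.sqrt (2 * n * (n + 1)) := by
  simpa only [finrank_euclideanSpace_fin] using
    stmt_16_general hu (fun i => (hc i).le) ha hb hx hy
end
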